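/- Let H be a finite abelian group, k ∈ ℕ₀, and n ∈ ℕ with n ≥ 2. Then for each m ∈ [1, n], setting δ = max{0, m − |H| + 1}, one has SD_{k+δ}(H ⊕ C_n) ≥ SD_{k+1}(H) + m − 1. In particular, SD_k(C_n ⊕ C_n) ≥ SD_{k+1}(C_n) + n − 2. -/

import Mathlib

open Multiset

/-- A sequence (finite multiset) over `G` is zero-sumfree if every nonempty
subsequence has nonzero sum. -/
def IsZeroSumfree {G : Type*} [AddCommMonoid G] (S : Multiset G) : Prop :=
  ∀ T ≤ S, T ≠ 0 → T.sum ≠ 0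

/-- A minimal zero-sum sequence: a nonempty sequence with sum zero all of whose
nonempty proper subsequences have nonzero sum. -/
def IsMinimalZeroSum {G : Type*} [AddCommMonoid G] (S : Multiset G) : Prop :=
  S ≠ 0 ∧ S.sum = 0 ∧ ∀ T ≤ S, T ≠ 0 → T ≠ S → T.sum ≠ 0

/-- The cumulated multiplicity of level `ℓ` of a sequence:
`cm_ℓ(S) = Σ_{g ∈ G} max {0, v_g(S) − ℓ}`. -/
noncomputable def cmul {G : Type*} [AddCommMonoid G] (ℓ : ℕ) (S : Multiset G) : ℕ :=
  letI := Classical.decEq G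
  ∑ g ∈ S.toFinset, (S.count g - ℓ)

/-- `SD_{(k,ℓ)}(G)`: the maximum length of a minimal zero-sum sequence `S` over `G`
with `cm_ℓ(S) ≤ k`. -/
noncomputable def SDpair (G : Type*) [AddCommMonoid G] (k ℓ : ℕ) : ℕ :=
  sSup {m | ∃ S : Multiset G, IsMinimalZeroSum S ∧ cmul ℓ S ≤ k ∧ Multiset.card S = m}

/-- `SD_k(G)`: the `k`-th Strong Davenport constant. -/
noncomputable def SDk (G : Type*) [AddCommMonoid G] (k : ℕ) : ℕ := SDpair G k 1

/-- The Strong Davenport constant `SD(G) = SD_0(G)`. -/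
noncomputable def SD (G : Type*) [AddCommMonoid G] : ℕ := SDk G 0

/-- The Olson constant `Ol(G) = SD_1(G)`. -/
noncomputable def Ol (G : Type*) [AddCommMonoid G] : ℕ := SDk G 1

/-- `ol_k(G)`: the maximum length of a zero-sumfree sequence `S` over `G` with
`cm(S) ≤ k`. -/
noncomputable def olk (G : Type*) [AddCommMonoid G] (k : ℕ) : ℕ :=
  sSup {m | ∃ S : Multiset G, IsZeroSumfree S ∧ cmul 1 S ≤ k ∧ Multiset.card S = m}

/-- `Ol_k(G)`: the smallest integer `ℓ` such that every sequence `S` over `G` with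
`cm(S) ≤ k` and `|S| ≥ ℓ` has a nonempty zero-sum subsequence. -/
noncomputable def Olk (G : Type*) [AddCommMonoid G] (k : ℕ) : ℕ :=
  sInf {m | ∀ S : Multiset G, cmul 1 S ≤ k → m ≤ Multiset.card S →
    ∃ T, T ≤ S ∧ T ≠ 0 ∧ T.sum = 0}

/-- The Davenport constant `D(G)`: the maximum length of a minimal zero-sum
sequence over `G`. -/
noncomputable def DavenportD (G : Type*) [AddCommMonoid G] : ℕ :=
  sSup {m | ∃ S : Multiset G, IsMinimalZeroSum S ∧ Multiset.card S = m}

/-!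
Let `S = g T` be a minimal zero-sum sequence over `H` attaining `SD_{k+1}(H)`, where `g` is chosen
to be a repeated term whenever there is one, so that `cm(T) ≤ k`. Replace `g` by a sequence `L`
over `H` with sum `g`, lift the terms of `L` to `H ⊕ K` along a minimal zero-sum sequence
`V ≠ {0}` over `K` of the same length, and lift `T` by second coordinate `0`. In a zero-sum
subsequence, minimality of `V` forces all or none of the lifted terms of `L` to occur, and
minimality of `S` then does the rest. The cumulated multiplicity is at most `cm(T) + cm(L)`.

It remains to find `L` of length `m` with few repetitions. If `m ≥ |H|`, take the nonzero elements
of `H`, pad with zeros and correct the sum by one term. If `m < |H|`, every nonzero `g` is a sum of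
`m` distinct elements: if it were not, exchanging a single element would show that each `m`-subset
`A` is invariant under translation by `g - σ(A)`, which forces `2H = 0`; and for `2H = 0` one
completes an `(m - 2)`-subset by a pair `{x, x + d}` with a prescribed sum `d ≠ 0`, passing to
complements when `2m > |H|`.
-/

open scoped Pointwise

section DistinctSummands

variable {H : Type*} [AddCommGroup H]

lemma sub_sum_mem_stabilizer_of_forall_sum_ne [DecidableEq H] {A : Finset H} {g : H}
    (hne : ∀ B : Finset H, B.card = A.card → ∑ x ∈ B, x ≠ g) :
    g - ∑ x ∈ A, x ∈ AddAction.stabilizer H A := by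
  refine AddAction.mem_stabilizer_finset'.2 fun a ha => ?_
  by_contra hswap
  rw [vadd_eq_add] at hswap
  have hswap' : g - ∑ x ∈ A, x + a ∉ A.erase a := mt Finset.mem_of_mem_erase hswap
  refine hne (insert (g - ∑ x ∈ A, x + a) (A.erase a)) ?_ ?_
  · rw [Finset.card_insert_of_notMem hswap', Finset.card_erase_add_one ha]
  · rw [Finset.sum_insert hswap', add_assoc, Finset.add_sum_erase A (fun x => x) ha,
      sub_add_cancel]

lemma add_self_eq_zero_of_mem_stabilizer_insert [DecidableEq H] {B : Finset H} {a b d : H}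
    (hb : b ∉ B) (hab : a ≠ b) (hd : d ∈ AddAction.stabilizer H (insert a B))
    (hd' : d + a - b ∈ AddAction.stabilizer H (insert b B)) : d + d = 0 := by
  simp only [AddAction.mem_stabilizer_finset, vadd_eq_add] at hd hd'
  by_contra hdd
  have hd0 : d ≠ 0 := by
    rintro rfl
    exact hdd (add_zero 0)
  have ha_shift : d + (d + a) ∈ B := by
    have hmem : d + (d + a) ∈ insert a B := by
      rw [hd, hd]
      exact Finset.mem_insert_self a B
    refine Finset.mem_of_mem_insert_of_ne hmem fun h => hdd ?_
    rwa [← add_assoc, add_eq_right] at h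
  have hb_shift : d + b ∈ B := by
    have hmem : d + b ∈ insert b B := by
      rw [← hd', show d + a - b + (d + b) = d + (d + a) by abel]
      exact Finset.mem_insert_of_mem ha_shift
    exact Finset.mem_of_mem_insert_of_ne hmem fun h => hd0 (add_eq_right.1 h)
  have hb_mem : b ∈ insert a B := (hd b).1 (Finset.mem_insert_of_mem hb_shift)
  exact hb (Finset.mem_of_mem_insert_of_ne hb_mem hab.symm)

variable [Fintype H]

lemma exists_finset_card_eq_sum_eq_of_add_self_ne_zero {u : H} (hu : u + u ≠ 0) {r : ℕ}
    (hr : 0 < r) (hrH : r < Fintype.card H) (g : H) :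
    ∃ A : Finset H, A.card = r ∧ ∑ x ∈ A, x = g := by
  classical
  by_contra! hne
  have hu0 : u ≠ 0 := by
    rintro rfl
    exact hu (add_zero 0)
  obtain ⟨B, hB, hBcard⟩ : ∃ B ⊆ ({u, 0}ᶜ : Finset H), B.card = r - 1 :=
    Finset.exists_subset_card_eq <| by
      rw [Finset.card_compl, Finset.card_pair hu0]
      omega
  have huB : u ∉ B := fun h => by simpa using hB h
  have h0B : 0 ∉ B := fun h => by simpa using hB h
  have hperiod {c : H} (hc : c ∉ B) :
      g - (c + ∑ x ∈ B, x) ∈ AddAction.stabilizer H (insert c B) := by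
    have hcard : (insert c B).card = r := by
      rw [Finset.card_insert_of_notMem hc]
      omega
    rw [← Finset.sum_insert (f := fun x => x) hc]
    exact sub_sum_mem_stabilizer_of_forall_sum_ne fun A hA => hne A (hA.trans hcard)
  have htwo {a b : H} (ha : a ∉ B) (hb : b ∉ B) (hab : a ≠ b) :
      (g - (a + ∑ x ∈ B, x)) + (g - (a + ∑ x ∈ B, x)) = 0 := by
    refine add_self_eq_zero_of_mem_stabilizer_insert hb hab (hperiod ha) ?_
    convert hperiod hb using 1
    abel
  apply hu
  calc u + u = (g - (0 + ∑ x ∈ B, x)) + (g - (0 + ∑ x ∈ B, x))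
        - ((g - (u + ∑ x ∈ B, x)) + (g - (u + ∑ x ∈ B, x))) := by abel
    _ = 0 := by rw [htwo h0B huB hu0.symm, htwo huB h0B hu0, sub_zero]

lemma sum_univ_mem_zmultiples (htwo : ∀ x : H, x + x = 0) {w : H} (hw : w ≠ 0) :
    ∑ x : H, x ∈ AddSubgroup.zmultiples w := by
  rw [← QuotientAddGroup.eq_zero_iff, ← QuotientAddGroup.mk'_apply, _root_.map_sum]
  refine Finset.sum_involution (fun x _ => x + w) (fun x _ => ?_) (fun x _ _ => by simpa using hw)
    (fun x _ => Finset.mem_univ _) (fun x _ => by rw [add_assoc, htwo, add_zero])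
  rw [← _root_.map_add, ← add_assoc, htwo, zero_add, QuotientAddGroup.mk'_apply,
    QuotientAddGroup.eq_zero_iff]
  exact AddSubgroup.mem_zmultiples w

lemma sum_univ_eq_zero_of_forall_add_self_eq_zero (htwo : ∀ x : H, x + x = 0)
    (hcard : 2 < Fintype.card H) : ∑ x : H, x = 0 := by
  by_contra hsum
  have hsum_eq {w : H} (hw : w ≠ 0) : ∑ x : H, x = w := by
    obtain ⟨z, hz⟩ := AddSubgroup.mem_zmultiples_iff.1 (sum_univ_mem_zmultiples htwo hw)
    rw [← hz] at hsum ⊢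
    obtain ⟨j, rfl | rfl⟩ := z.even_or_odd'
    · rw [mul_comm, mul_zsmul, two_zsmul, htwo, zsmul_zero] at hsum
      exact absurd rfl hsum
    · rw [add_zsmul, mul_comm, mul_zsmul, two_zsmul, htwo, zsmul_zero, zero_add, one_zsmul]
  obtain ⟨a, b, c, hab, hac, hbc⟩ := Fintype.two_lt_card_iff.1 hcard
  have hdiff : a - b = a - c :=
    (hsum_eq (sub_ne_zero.2 hab)).symm.trans (hsum_eq (sub_ne_zero.2 hac))
  exact hbc (sub_right_injective hdiff)

lemma exists_finset_card_eq_sum_ne {g : H} (hg : g ≠ 0) {r : ℕ} (hrH : r < Fintype.card H) :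
    ∃ B : Finset H, B.card = r ∧ ∑ x ∈ B, x ≠ g := by
  classical
  rcases Nat.eq_zero_or_pos r with rfl | hr
  · exact ⟨∅, Finset.card_empty, by simpa using hg.symm⟩
  obtain ⟨C, -, hC⟩ : ∃ C ⊆ (Finset.univ : Finset H), C.card = r + 1 :=
    Finset.exists_subset_card_eq (by rwa [Finset.card_univ])
  obtain ⟨a, ha, b, hb, hab⟩ := Finset.one_lt_card.1 (by omega : 1 < C.card)
  by_contra! hsum
  have hsum_erase {c : H} (hc : c ∈ C) : c + g = ∑ x ∈ C, x := by
    rw [← Finset.add_sum_erase C (fun x => x) hc, hsum (C.erase c)]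
    rw [Finset.card_erase_of_mem hc, hC, Nat.add_sub_cancel]
  exact hab (add_right_cancel ((hsum_erase ha).trans (hsum_erase hb).symm))

lemma exists_finset_card_add_two_sum_eq (htwo : ∀ x : H, x + x = 0) {B : Finset H} {g : H}
    (hB : 2 * B.card < Fintype.card H) (hg : ∑ x ∈ B, x ≠ g) :
    ∃ A : Finset H, A.card = B.card + 2 ∧ ∑ x ∈ A, x = g := by
  classical
  set d := g - ∑ x ∈ B, x with hd
  have hd0 : d ≠ 0 := sub_ne_zero.2 hg.symm
  obtain ⟨x, hx⟩ : ∃ x, x ∉ B ∪ B.image (· + d) := by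
    by_contra! hall
    have hunion := Finset.card_union_le B (B.image (· + d))
    have himage : (B.image (· + d)).card ≤ B.card := Finset.card_image_le
    rw [Finset.eq_univ_iff_forall.2 hall, Finset.card_univ] at hunion
    omega
  obtain ⟨hxB, hx_image⟩ := not_or.1 (mt Finset.mem_union.2 hx)
  have hxd : x + d ∉ B := fun h =>
    hx_image (Finset.mem_image.2 ⟨x + d, h, by rw [add_assoc, htwo, add_zero]⟩)
  have hx_insert : x ∉ insert (x + d) B := by simp [hd0, hxB]
  refine ⟨insert x (insert (x + d) B), ?_, ?_⟩
  · rw [Finset.card_insert_of_notMem hx_insert, Finset.card_insert_of_notMem hxd]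
  · rw [Finset.sum_insert hx_insert, Finset.sum_insert hxd, ← add_assoc, ← add_assoc, htwo,
      zero_add, hd, sub_add_cancel]

lemma exists_finset_card_eq_sum_eq_of_two_mul_le (htwo : ∀ x : H, x + x = 0) {g : H}
    (hg : g ≠ 0) {r : ℕ} (hr : 0 < r) (hrH : 2 * r ≤ Fintype.card H) :
    ∃ A : Finset H, A.card = r ∧ ∑ x ∈ A, x = g := by
  obtain rfl | ⟨s, rfl⟩ : r = 1 ∨ ∃ s, r = s + 2 := by
    rcases r with _ | _ | s
    · omega
    · exact Or.inl rfl
    · exact Or.inr ⟨s, rfl⟩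
  · exact ⟨{g}, Finset.card_singleton g, Finset.sum_singleton _ g⟩
  · obtain ⟨B, rfl, hBsum⟩ := exists_finset_card_eq_sum_ne hg (by omega : s < Fintype.card H)
    exact exists_finset_card_add_two_sum_eq htwo (by omega) hBsum

lemma exists_finset_card_eq_sum_eq_of_forall_add_self_eq_zero (htwo : ∀ x : H, x + x = 0) {g : H}
    (hg : g ≠ 0) {r : ℕ} (hr : 0 < r) (hrH : r < Fintype.card H) :
    ∃ A : Finset H, A.card = r ∧ ∑ x ∈ A, x = g := by
  classical
  by_cases hsmall : 2 * r ≤ Fintype.card H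
  · exact exists_finset_card_eq_sum_eq_of_two_mul_le htwo hg hr hsmall
  · obtain ⟨B, hBcard, hBsum⟩ := exists_finset_card_eq_sum_eq_of_two_mul_le htwo hg
      (r := Fintype.card H - r) (by omega) (by omega)
    refine ⟨Bᶜ, by rw [Finset.card_compl]; omega, ?_⟩
    have hsum := Finset.sum_add_sum_compl B (fun x => x)
    rw [hBsum, sum_univ_eq_zero_of_forall_add_self_eq_zero htwo (by omega), ← htwo g] at hsum
    exact add_left_cancel hsum

theorem exists_finset_card_eq_sum_eq {g : H} (hg : g ≠ 0) {r : ℕ} (hr : 0 < r)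
    (hrH : r < Fintype.card H) : ∃ A : Finset H, A.card = r ∧ ∑ x ∈ A, x = g := by
  by_cases htwo : ∀ x : H, x + x = 0
  · exact exists_finset_card_eq_sum_eq_of_forall_add_self_eq_zero htwo hg hr hrH
  · obtain ⟨u, hu⟩ := not_forall.1 htwo
    exact exists_finset_card_eq_sum_eq_of_add_self_ne_zero hu hr hrH g

end DistinctSummands

section MultisetLifts

variable {α β : Type*}

lemma exists_le_map_eq_of_le_map {f : α → β} {S : Multiset α} {U : Multiset β}
    (hU : U ≤ S.map f) : ∃ R ≤ S, R.map f = U := by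
  induction S, U using Quotient.inductionOn₂ with | _ l u
  obtain ⟨u', hperm, hsub⟩ : List.Subperm u (l.map f) := hU
  obtain ⟨l', hl', rfl⟩ := List.sublist_map_iff.1 hsub
  exact ⟨l', hl'.subperm, coe_eq_coe.2 hperm⟩

lemma exists_map_fst_eq_map_snd_eq {L : Multiset α} {V : Multiset β} (h : card L = card V) :
    ∃ W : Multiset (α × β), W.map Prod.fst = L ∧ W.map Prod.snd = V := by
  induction L, V using Quotient.inductionOn₂ with | _ l v
  refine ⟨(l.zip v : List (α × β)), ?_, ?_⟩
  · exact congrArg _ (List.map_fst_zip (le_of_eq h))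
  · exact congrArg _ (List.map_snd_zip (ge_of_eq h))

end MultisetLifts

section CumulatedMultiplicity

variable {G G' : Type*} [AddCommMonoid G] [AddCommMonoid G']

lemma cmul_one_add_card_toFinset [DecidableEq G] (S : Multiset G) :
    cmul 1 S + S.toFinset.card = card S := by
  obtain rfl : ‹DecidableEq G› = Classical.decEq G := Subsingleton.elim _ _
  let := Classical.decEq G
  rw [cmul, Finset.card_eq_sum_ones, ← Finset.sum_add_distrib, ← toFinset_sum_count_eq S]
  exact Finset.sum_congr rfl fun g hg =>
    Nat.sub_add_cancel (one_le_count_iff_mem.2 (mem_toFinset.1 hg))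

lemma cmul_one_lt_card {S : Multiset G} (hS : S ≠ 0) : cmul 1 S < card S := by
  classical
  rw [← cmul_one_add_card_toFinset S, Nat.lt_add_right_iff_pos, Finset.card_pos]
  exact toFinset_nonempty.2 hS

lemma cmul_one_eq_zero_of_nodup {S : Multiset G} (hS : S.Nodup) : cmul 1 S = 0 := by
  classical
  have hcard := cmul_one_add_card_toFinset S
  rwa [toFinset_card_of_nodup hS, Nat.add_eq_right] at hcard

lemma cmul_one_le_cmul_one_map (f : G → G') (S : Multiset G) :
    cmul 1 S ≤ cmul 1 (S.map f) := by
  classical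
  have hS := cmul_one_add_card_toFinset S
  have hmap := cmul_one_add_card_toFinset (S.map f)
  have himage : (S.toFinset.image f).card ≤ S.toFinset.card := Finset.card_image_le
  rw [card_map, toFinset_map] at hmap
  omega

lemma cmul_one_map_of_injective {f : G → G'} (hf : Function.Injective f) (S : Multiset G) :
    cmul 1 (S.map f) = cmul 1 S := by
  classical
  have hS := cmul_one_add_card_toFinset S
  have hmap := cmul_one_add_card_toFinset (S.map f)
  rw [card_map, toFinset_map, Finset.card_image_of_injective _ hf] at hmap
  omega

lemma cmul_one_add_of_disjoint {S T : Multiset G} (hST : Disjoint S T) :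
    cmul 1 (S + T) = cmul 1 S + cmul 1 T := by
  classical
  have hS := cmul_one_add_card_toFinset S
  have hT := cmul_one_add_card_toFinset T
  have hadd := cmul_one_add_card_toFinset (S + T)
  rw [toFinset_add, Finset.card_union_of_disjoint (disjoint_toFinset.2 hST), card_add] at hadd
  omega

lemma exists_eq_cons_cmul_one_eq_sub_one {S : Multiset G} (hS : S ≠ 0) :
    ∃ g T, S = g ::ₘ T ∧ cmul 1 T = cmul 1 S - 1 := by
  classical
  by_cases hnodup : S.Nodup
  · obtain ⟨g, hg⟩ := exists_mem_of_ne_zero hS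
    obtain ⟨T, rfl⟩ := exists_cons_of_mem hg
    refine ⟨g, T, rfl, ?_⟩
    rw [cmul_one_eq_zero_of_nodup hnodup, cmul_one_eq_zero_of_nodup (nodup_cons.1 hnodup).2]
  · rw [nodup_iff_ne_cons_cons] at hnodup
    push Not at hnodup
    obtain ⟨g, T, rfl⟩ := hnodup
    refine ⟨g, g ::ₘ T, rfl, ?_⟩
    have hT := cmul_one_add_card_toFinset (g ::ₘ T)
    have hgT := cmul_one_add_card_toFinset (g ::ₘ g ::ₘ T)
    rw [toFinset_cons g (g ::ₘ T), Finset.insert_eq_of_mem (by simp),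
      card_cons g (g ::ₘ T)] at hgT
    omega

end CumulatedMultiplicity

lemma exists_card_eq_sum_eq_cmul_one_le {H : Type*} [AddCommGroup H] [Fintype H] {g : H}
    (hg : g ≠ 0) {m : ℕ} (hm : 0 < m) :
    ∃ L : Multiset H, card L = m ∧ L.sum = g ∧ cmul 1 L ≤ m + 1 - Fintype.card H := by
  classical
  by_cases hmH : m < Fintype.card H
  · obtain ⟨A, hAcard, hAsum⟩ := exists_finset_card_eq_sum_eq hg hm hmH
    refine ⟨A.val, hAcard, by rw [← hAsum, Finset.sum_val]; rfl, ?_⟩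
    rw [cmul_one_eq_zero_of_nodup A.nodup]
    exact Nat.zero_le _
  · have hHpos : 0 < Fintype.card H := Fintype.card_pos
    set A : Finset H := Finset.univ.erase 0
    have hAcard : A.card = Fintype.card H - 1 := Finset.card_erase_of_mem (Finset.mem_univ 0)
    set L : Multiset H := (g - A.val.sum) ::ₘ (A.val + replicate (m - Fintype.card H) 0) with hL
    have hLcard : card L = m := by
      rw [hL, card_cons, card_add, card_replicate, Finset.card_val, hAcard]
      omega
    refine ⟨L, hLcard, by simp [hL], ?_⟩
    have hAL : A.card ≤ L.toFinset.card := Finset.card_le_card fun x hx => by simp [hL, hx]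
    have hcm := cmul_one_add_card_toFinset L
    omega

section ZeroSumSequences

variable {G G' : Type*} [AddCommGroup G] [AddCommGroup G']

lemma IsZeroSumfree.isMinimalZeroSum_neg_sum_cons {T : Multiset G} (hT : IsZeroSumfree T) :
    IsMinimalZeroSum (-T.sum ::ₘ T) := by
  refine ⟨cons_ne_zero, by simp, fun U hU hU0 hne hsum => ?_⟩
  by_cases hmem : -T.sum ∈ U
  · obtain ⟨R, rfl⟩ := exists_cons_of_mem hmem
    obtain ⟨Q, rfl⟩ := Multiset.le_iff_exists_add.1 ((cons_le_cons_iff _).1 hU)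
    refine hT Q (le_add_left _ _) (fun hQ => hne (by simp [hQ])) ?_
    simpa using hsum
  · exact hT U ((le_cons_of_notMem hmem).1 hU) hU0 hsum

lemma isZeroSumfree_replicate {e : G} {r : ℕ} (hr : r < addOrderOf e) :
    IsZeroSumfree (replicate r e) := by
  intro U hU hU0
  obtain ⟨j, hj, rfl⟩ := le_replicate_iff.1 hU
  rw [sum_replicate]
  exact nsmul_ne_zero_of_lt_addOrderOf (fun hj0 => hU0 (by rw [hj0, replicate_zero]))
    (hj.trans_lt hr)

lemma exists_isMinimalZeroSum_card_eq_of_le_addOrderOf {e : G} {m : ℕ} (hm : 0 < m)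
    (hme : m ≤ addOrderOf e) : ∃ V : Multiset G, IsMinimalZeroSum V ∧ card V = m := by
  have hfree : IsZeroSumfree (replicate (m - 1) e) := isZeroSumfree_replicate (by omega)
  refine ⟨_, hfree.isMinimalZeroSum_neg_sum_cons, ?_⟩
  rw [card_cons, card_replicate, Nat.sub_add_cancel hm]

lemma isMinimalZeroSum_singleton_zero : IsMinimalZeroSum ({0} : Multiset G) :=
  ⟨singleton_ne_zero 0, sum_singleton 0, fun _ hU hU0 hne =>
    absurd ((le_singleton.1 hU).resolve_left hU0) hne⟩

lemma isMinimalZeroSum_neg_pair {e : G} (he : e ≠ 0) : IsMinimalZeroSum {-e, e} := by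
  have hfree : IsZeroSumfree ({e} : Multiset G) := fun U hU hU0 => by
    rwa [(le_singleton.1 hU).resolve_left hU0, sum_singleton]
  simpa using hfree.isMinimalZeroSum_neg_sum_cons

namespace IsMinimalZeroSum

variable {S T : Multiset G}

lemma eq_zero_or_eq_of_le (hS : IsMinimalZeroSum S) {U : Multiset G} (hU : U ≤ S)
    (hsum : U.sum = 0) : U = 0 ∨ U = S := by
  by_contra! hne
  exact hS.2.2 U hU hne.1 hne.2 hsum

lemma eq_singleton_of_zero_mem (hS : IsMinimalZeroSum S) (h0 : (0 : G) ∈ S) : S = {0} :=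
  ((hS.eq_zero_or_eq_of_le (singleton_le.2 h0) (sum_singleton 0)).resolve_left
    (singleton_ne_zero 0)).symm

lemma map_of_injective (hS : IsMinimalZeroSum S) {f : G →+ G'} (hf : Function.Injective f) :
    IsMinimalZeroSum (S.map f) := by
  refine ⟨by simpa using hS.1, ?_, fun U hU hU0 hne hsum => ?_⟩
  · rw [← _root_.map_multiset_sum, hS.2.1, _root_.map_zero]
  · obtain ⟨R, hR, rfl⟩ := exists_le_map_eq_of_le_map hU
    rw [← _root_.map_multiset_sum, map_eq_zero_iff f hf] at hsum
    rcases hS.eq_zero_or_eq_of_le hR hsum with rfl | rfl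
    · exact hU0 (map_zero f)
    · exact hne rfl

lemma map_inl_add {W : Multiset (G × G')} (hT : IsMinimalZeroSum (W.sum.1 ::ₘ T))
    (hW : IsMinimalZeroSum (W.map Prod.snd)) :
    IsMinimalZeroSum (T.map (AddMonoidHom.inl G G') + W) := by
  classical
  have hsnd (U : Multiset (G × G')) : U.sum.2 = (U.map Prod.snd).sum :=
    _root_.map_multiset_sum (AddMonoidHom.snd G G') U
  have hsum_inl (R : Multiset G) : (R.map (AddMonoidHom.inl G G')).sum = (R.sum, 0) :=
    (_root_.map_multiset_sum (AddMonoidHom.inl G G') R).symm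
  have hTsum : T.sum + W.sum.1 = 0 := by rw [add_comm, ← sum_cons, hT.2.1]
  refine ⟨fun h => ?_, ?_, fun U hU hU0 hne hsum => ?_⟩
  · obtain rfl : W = 0 := (add_eq_zero.1 h).2
    exact hW.1 (map_zero _)
  · rw [sum_add, hsum_inl]
    exact Prod.ext hTsum (by simp [hsnd, hW.2.1])
  obtain ⟨R, hR, hRU⟩ := exists_le_map_eq_of_le_map (Multiset.sub_le_iff_le_add.2 hU)
  have hsplit : U = R.map (AddMonoidHom.inl G G') + U ∩ W := by rw [hRU, sub_add_inter]
  have hsum_split : (R.sum, 0) + (U ∩ W).sum = 0 := by rw [← hsum_inl, ← sum_add, ← hsplit, hsum]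
  have hfst_sum : R.sum + (U ∩ W).sum.1 = 0 := congrArg Prod.fst hsum_split
  have hsnd_sum : ((U ∩ W).map Prod.snd).sum = 0 := by
    simpa [hsnd] using congrArg Prod.snd hsum_split
  rcases hW.eq_zero_or_eq_of_le (map_le_map inter_le_right) hsnd_sum with hnone | hall
  · have hUW : U ∩ W = 0 := map_eq_zero.1 hnone
    have hRfree : R = 0 := by
      refine (hT.eq_zero_or_eq_of_le (hR.trans (le_cons_self T _)) ?_).resolve_right ?_
      · simpa [hUW] using hfst_sum
      · exact fun h => (hR.trans_lt (lt_cons_self T _)).ne h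
    exact hU0 (by rw [hsplit, hRfree, hUW, map_zero, add_zero])
  · have hUW : U ∩ W = W := eq_of_le_of_card_le inter_le_right (by
      rw [← card_map Prod.snd W, ← hall, card_map])
    have hRT : R = T := by
      refine (cons_inj_right W.sum.1).1 ((hT.eq_zero_or_eq_of_le (cons_le_cons _ hR)
        ?_).resolve_left cons_ne_zero)
      rw [sum_cons, add_comm, ← hfst_sum, hUW]
    exact hne (by rw [hsplit, hRT, hUW])

end IsMinimalZeroSum

end ZeroSumSequences

section StrongDavenport

variable {G H K : Type*} [AddCommGroup G] [AddCommGroup H] [AddCommGroup K]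

lemma bddAbove_card_isMinimalZeroSum [Finite G] (k : ℕ) :
    BddAbove {m | ∃ S : Multiset G, IsMinimalZeroSum S ∧ cmul 1 S ≤ k ∧ card S = m} := by
  classical
  cases nonempty_fintype G
  refine ⟨k + Fintype.card G, ?_⟩
  rintro _ ⟨S, -, hcm, rfl⟩
  rw [← cmul_one_add_card_toFinset S]
  exact Nat.add_le_add hcm (Finset.card_le_univ _)

lemma IsMinimalZeroSum.card_le_SDk [Finite G] {S : Multiset G} (hS : IsMinimalZeroSum S) {k : ℕ}
    (hcm : cmul 1 S ≤ k) : card S ≤ SDk G k :=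
  le_csSup (bddAbove_card_isMinimalZeroSum k) ⟨S, hS, hcm, rfl⟩

lemma exists_isMinimalZeroSum_card_eq_SDk (G : Type*) [AddCommGroup G] [Finite G] (k : ℕ) :
    ∃ S : Multiset G, IsMinimalZeroSum S ∧ cmul 1 S ≤ k ∧ card S = SDk G k := by
  have hcm : cmul 1 ({0} : Multiset G) = 0 := cmul_one_eq_zero_of_nodup (nodup_singleton 0)
  have hone : ∃ S : Multiset G, IsMinimalZeroSum S ∧ cmul 1 S ≤ k ∧ card S = 1 :=
    ⟨{0}, isMinimalZeroSum_singleton_zero, hcm.le.trans (Nat.zero_le k), card_singleton 0⟩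
  exact Nat.sSup_mem ⟨1, hone⟩ (bddAbove_card_isMinimalZeroSum k)

lemma SDk_eq_one_of_subsingleton [Subsingleton G] (k : ℕ) : SDk G k = 1 := by
  obtain ⟨S, hS, -, hcard⟩ := exists_isMinimalZeroSum_card_eq_SDk G k
  obtain ⟨g, hg⟩ := exists_mem_of_ne_zero hS.1
  rw [← hcard, hS.eq_singleton_of_zero_mem (Subsingleton.elim g 0 ▸ hg), card_singleton]

lemma two_le_SDk_succ [Finite G] [Nontrivial G] (k : ℕ) : 2 ≤ SDk G (k + 1) := by
  obtain ⟨e, he⟩ := exists_ne (0 : G)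
  have hcm : cmul 1 {-e, e} < 2 := cmul_one_lt_card (isMinimalZeroSum_neg_pair he).1
  exact (isMinimalZeroSum_neg_pair he).card_le_SDk (by omega)

lemma SDk_le_SDk_of_injective [Finite K] {f : G →+ K} (hf : Function.Injective f) (k : ℕ) :
    SDk G k ≤ SDk K k := by
  have : Finite G := Finite.of_injective f hf
  obtain ⟨S, hS, hcm, hcard⟩ := exists_isMinimalZeroSum_card_eq_SDk G k
  rw [← hcard, ← card_map f S]
  exact (hS.map_of_injective hf).card_le_SDk (by rwa [cmul_one_map_of_injective hf])

lemma IsMinimalZeroSum.card_add_card_le_SDk_prod [Finite H] [Finite K] {T L : Multiset H}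
    {V : Multiset K} (hT : IsMinimalZeroSum (L.sum ::ₘ T)) (hV : IsMinimalZeroSum V)
    (hV0 : 0 ∉ V) (hcard : card L = card V) {k : ℕ} (hk : cmul 1 T + cmul 1 L ≤ k) :
    card T + card V ≤ SDk (H × K) k := by
  obtain ⟨W, rfl, rfl⟩ := exists_map_fst_eq_map_snd_eq hcard
  have hfst : (W.map Prod.fst).sum = W.sum.1 :=
    (_root_.map_multiset_sum (AddMonoidHom.fst H K) W).symm
  have hmin := (hfst ▸ hT).map_inl_add hV
  have hdisj : Disjoint (T.map (AddMonoidHom.inl H K)) W := by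
    refine disjoint_left.2 fun {x} hxT hxW => hV0 ?_
    obtain ⟨h, -, rfl⟩ := mem_map.1 hxT
    exact mem_map_of_mem Prod.snd hxW
  have hcm : cmul 1 (T.map (AddMonoidHom.inl H K) + W) ≤ cmul 1 T + cmul 1 (W.map Prod.fst) := by
    rw [cmul_one_add_of_disjoint hdisj,
      cmul_one_map_of_injective (f := AddMonoidHom.inl H K) (Prod.mk_left_injective 0)]
    exact Nat.add_le_add_left (cmul_one_le_cmul_one_map Prod.fst W) _
  simpa using hmin.card_le_SDk (hcm.trans hk)

lemma SDk_succ_add_card_le_SDk_prod_add_one [Finite H] [Nontrivial H] [Finite K] (k : ℕ)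
    {V : Multiset K} (hV : IsMinimalZeroSum V) (hV0 : 0 ∉ V) {δ : ℕ}
    (hL : ∀ g : H, g ≠ 0 → ∃ L : Multiset H, card L = card V ∧ L.sum = g ∧ cmul 1 L ≤ δ) :
    SDk H (k + 1) + card V ≤ SDk (H × K) (k + δ) + 1 := by
  obtain ⟨S, hS, hScm, hScard⟩ := exists_isMinimalZeroSum_card_eq_SDk H (k + 1)
  obtain ⟨g, T, rfl, hTcm⟩ := exists_eq_cons_cmul_one_eq_sub_one hS.1
  have hg : g ≠ 0 := by
    rintro rfl
    have hcard := two_le_SDk_succ (G := H) k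
    rw [← hScard, hS.eq_singleton_of_zero_mem (mem_cons_self 0 T), card_singleton] at hcard
    omega
  obtain ⟨L, hLcard, rfl, hLcm⟩ := hL g hg
  have hle := hS.card_add_card_le_SDk_prod hV hV0 hLcard (k := k + δ) (by omega)
  rw [← hScard, card_cons]
  omega

end StrongDavenport

theorem SDk_prod_cyclic_lower_bound_general {H K : Type*} [AddCommGroup H] [Fintype H]
    [AddCommGroup K] [Finite K] [Nontrivial K] (k : ℕ) {V : Multiset K}
    (hV : IsMinimalZeroSum V) :
    SDk H (k + 1) + (card V - 1) ≤ SDk (H × K) (k + (card V + 1 - Fintype.card H)) := by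
  have hVpos : 0 < card V := card_pos.2 hV.1
  rcases subsingleton_or_nontrivial H with hH | hH
  · have hHcard : Fintype.card H = 1 :=
      Fintype.card_eq_one_iff.2 ⟨0, fun x => Subsingleton.elim x 0⟩
    calc SDk H (k + 1) + (card V - 1) = card V := by rw [SDk_eq_one_of_subsingleton]; omega
      _ ≤ SDk K (k + (card V + 1 - Fintype.card H)) :=
        hV.card_le_SDk ((cmul_one_lt_card hV.1).le.trans (by omega))
      _ ≤ _ := SDk_le_SDk_of_injective (f := AddMonoidHom.inr H K) (Prod.mk_right_injective 0) _
  by_cases hV0 : 0 ∈ V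
  · -- A lift of `g` along `V = {0}` could coincide with a term of the lift of `T`,
    -- so `g` is replaced by the two terms `(0, -e)` and `(g, e)` instead.
    obtain ⟨e, he⟩ := exists_ne (0 : K)
    have hHcard : 1 < Fintype.card H := Fintype.one_lt_card
    have hle := SDk_succ_add_card_le_SDk_prod_add_one (H := H) k (isMinimalZeroSum_neg_pair he)
      (by simp [he, eq_comm]) (δ := 0) fun g hg => ⟨{0, g}, rfl, by simp,
        (cmul_one_eq_zero_of_nodup (by simpa using hg.symm)).le⟩
    rw [hV.eq_singleton_of_zero_mem hV0, card_singleton,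
      Nat.sub_eq_zero_of_le (by omega : 1 + 1 ≤ Fintype.card H)]
    rw [card_pair] at hle
    omega
  · have hle := SDk_succ_add_card_le_SDk_prod_add_one k hV hV0 fun g hg =>
      exists_card_eq_sum_eq_cmul_one_le (H := H) hg hVpos
    omega

/-- For a finite abelian group `H`, `k ∈ ℕ₀`, `n ≥ 2` and `m ∈ [1, n]`, with
`δ = max{0, m − |H| + 1}`, one has `SD_{k+δ}(H ⊕ C_n) ≥ SD_{k+1}(H) + m − 1`;
in particular `SD_k(C_n ⊕ C_n) ≥ SD_{k+1}(C_n) + n − 2`. -/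
theorem SDk_prod_cyclic_lower_bound (H : Type*) [AddCommGroup H] [Fintype H]
    (k n : ℕ) (hn : 2 ≤ n) (m : ℕ) (hm1 : 1 ≤ m) (hmn : m ≤ n) :
    SDk H (k + 1) + (m - 1) ≤ SDk (H × ZMod n) (k + (m + 1 - Fintype.card H)) ∧
    SDk (ZMod n) (k + 1) + (n - 2) ≤ SDk (ZMod n × ZMod n) k := by
  have : NeZero n := ⟨by omega⟩
  have : Fact (1 < n) := ⟨hn⟩
  have hcyclic {r : ℕ} (hr : 0 < r) (hrn : r ≤ n) :
      ∃ V : Multiset (ZMod n), IsMinimalZeroSum V ∧ card V = r :=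
    exists_isMinimalZeroSum_card_eq_of_le_addOrderOf hr (by rwa [ZMod.addOrderOf_one])
  constructor
  · obtain ⟨V, hV, rfl⟩ := hcyclic hm1 hmn
    exact SDk_prod_cyclic_lower_bound_general k hV
  · obtain ⟨V, hV, hcard⟩ := hcyclic (r := n - 1) (by omega) (by omega)
    have hle := SDk_prod_cyclic_lower_bound_general (H := ZMod n) k hV
    rwa [hcard, ZMod.card, Nat.sub_add_cancel (by omega), Nat.sub_self] at hle
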